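/- Let L ≥ 0 and let u be a real number with 0 < |u| < 1/2. Then ∫_{−∞}^∞ e^{2ux} · 2·log((cosh x + cosh(L/2)) / (cosh x − 1)) dx = (2π/u) · (cosh(Lu) − cos(2πu)) / sin(2πu). (The integrand has an integrable logarithmic singularity at x = 0 and decays exponentially at ±∞, so the integral is finite.) -/

import Mathlib

open Real

/-!
Since `cosh x + cosh a = (eˣ / 2) (1 + e^{-(x + a)}) (1 + e^{-(x - a)})` and
`cosh x - 1 = (eˣ / 2) (1 - e^{-x})²`, the density is a combination of translates of
`log (1 + e^{-x})` and of `log |1 - e^{-x}|`, whose two-sided Laplace transforms exist for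
`0 < s < 1`. Expanding `log (1 - e^{-x})` in powers of `e^{-x}` on the positive half-line, and
folding the negative one onto it, turns the transform of `log |1 - e^{-x}|` into the
Mittag-Leffler series of `π cot (π s) / s`. The transform of `log (1 + e^{-x})` then follows from
`1 + e^{-x} = (1 - e^{-2x}) / (1 - e^{-x})`. Negative `s` reduces to positive `s` because the
density is even.
-/

open MeasureTheory Set Filter

theorem integrable_of_hasSum_of_summable_integral_norm {α ι E : Type*} [MeasurableSpace α]
    {μ : Measure α} [Countable ι] [NormedAddCommGroup E] {F : ι → α → E} {f : α → E}
    (hF : ∀ i, Integrable (F i) μ) (hsum : Summable fun i ↦ ∫ a, ‖F i a‖ ∂μ)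
    (hf : ∀ᵐ a ∂μ, HasSum (F · a) (f a)) : Integrable f μ := by
  refine ⟨aestronglyMeasurable_of_tendsto_ae atTop (f := fun t : Finset ι ↦ fun a ↦ ∑ i ∈ t, F i a)
    (fun t ↦ t.aestronglyMeasurable_fun_sum fun i _ ↦ (hF i).1) hf, ?_⟩
  calc ∫⁻ a, ‖f a‖ₑ ∂μ
      ≤ ∫⁻ a, ∑' i, ‖F i a‖ₑ ∂μ := lintegral_mono_ae <| hf.mono fun a ha ↦
        ha.tsum_eq ▸ enorm_tsum_le_tsum_enorm
    _ = ∑' i, ENNReal.ofReal (∫ a, ‖F i a‖ ∂μ) := by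
        simp_rw [lintegral_tsum fun i ↦ (hF i).1.enorm,
          ofReal_integral_norm_eq_lintegral_enorm (hF _)]
    _ < ⊤ := hsum.tsum_ofReal_lt_top

/-- The Laplace integral `∫ e^{s x} f x ∂μ(x)` converges absolutely and its value is `A`.
Taking `μ = volume` gives the two-sided Laplace transform of `f`, and restricting `volume` to a
half-line the one-sided one. The kernel is `e^{s x}`, not `e^{-s x}`. -/
structure HasLaplaceTransform (f : ℝ → ℝ) (μ : Measure ℝ) (s A : ℝ) : Prop where
  integrable : Integrable (fun x ↦ exp (s * x) * f x) μ
  integral_eq : ∫ x, exp (s * x) * f x ∂μ = A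

namespace HasLaplaceTransform

section Linear

variable {f g : ℝ → ℝ} {μ : Measure ℝ} {s A B : ℝ}

theorem add (hf : HasLaplaceTransform f μ s A) (hg : HasLaplaceTransform g μ s B) :
    HasLaplaceTransform (fun x ↦ f x + g x) μ s (A + B) where
  integrable := by simpa only [mul_add] using hf.integrable.fun_add hg.integrable
  integral_eq := by
    simp only [mul_add, integral_add hf.integrable hg.integrable, hf.integral_eq, hg.integral_eq]

theorem const_mul (c : ℝ) (hf : HasLaplaceTransform f μ s A) :
    HasLaplaceTransform (fun x ↦ c * f x) μ s (c * A) where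
  integrable := by simpa only [mul_left_comm] using hf.integrable.const_mul c
  integral_eq := by simp only [mul_left_comm _ c, integral_const_mul, hf.integral_eq]

theorem sub (hf : HasLaplaceTransform f μ s A) (hg : HasLaplaceTransform g μ s B) :
    HasLaplaceTransform (fun x ↦ f x - g x) μ s (A - B) := by
  simpa only [neg_one_mul, ← sub_eq_add_neg] using hf.add (hg.const_mul (-1))

theorem congr_ae (hf : HasLaplaceTransform f μ s A) (hfg : f =ᵐ[μ] g) :
    HasLaplaceTransform g μ s A := by
  have hexp : (fun x ↦ exp (s * x) * f x) =ᵐ[μ] fun x ↦ exp (s * x) * g x :=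
    hfg.mono fun x hx ↦ congrArg (exp (s * x) * ·) hx
  exact ⟨hf.integrable.congr hexp, integral_congr_ae hexp ▸ hf.integral_eq⟩

theorem of_hasSum {ι : Type*} [Countable ι] {F : ι → ℝ → ℝ} {A : ι → ℝ}
    (hF : ∀ i, HasLaplaceTransform (F i) μ s (A i)) (hF0 : ∀ i x, 0 ≤ F i x) (hA : Summable A)
    (hf : ∀ᵐ x ∂μ, HasSum (F · x) (f x)) : HasLaplaceTransform f μ s (∑' i, A i) := by
  have hnorm (i : ι) : ∫ x, ‖exp (s * x) * F i x‖ ∂μ = A i := by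
    simp_rw [norm_of_nonneg (mul_nonneg (exp_pos _).le (hF0 i _)), (hF i).integral_eq]
  have hsummable : Summable fun i ↦ ∫ x, ‖exp (s * x) * F i x‖ ∂μ := by simpa only [hnorm] using hA
  have hexp : ∀ᵐ x ∂μ, HasSum (fun i ↦ exp (s * x) * F i x) (exp (s * x) * f x) :=
    hf.mono fun x hx ↦ hx.mul_left _
  refine ⟨integrable_of_hasSum_of_summable_integral_norm (fun i ↦ (hF i).integrable) hsummable hexp,
    ?_⟩
  calc ∫ x, exp (s * x) * f x ∂μ
      = ∫ x, ∑' i, exp (s * x) * F i x ∂μ :=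
        integral_congr_ae <| hexp.mono fun _ hx ↦ hx.tsum_eq.symm
    _ = ∑' i, ∫ x, exp (s * x) * F i x ∂μ :=
        (integral_tsum_of_summable_integral_norm (fun i ↦ (hF i).integrable) hsummable).symm
    _ = ∑' i, A i := tsum_congr fun i ↦ (hF i).integral_eq

end Linear

section ChangeOfVariables

variable {f : ℝ → ℝ} {s A : ℝ}

theorem comp_neg (hf : HasLaplaceTransform f volume s A) :
    HasLaplaceTransform (fun x ↦ f (-x)) volume (-s) A where
  integrable := by simpa only [neg_mul, mul_neg] using hf.integrable.comp_neg
  integral_eq := by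
    rw [← hf.integral_eq, ← integral_neg_eq_self]
    simp only [neg_mul, mul_neg, neg_neg]

theorem comp_add_right (a : ℝ) (hf : HasLaplaceTransform f volume s A) :
    HasLaplaceTransform (fun x ↦ f (x + a)) volume s (exp (-(s * a)) * A) := by
  have hexp : (fun x ↦ exp (s * x) * f (x + a)) =
      fun x ↦ exp (-(s * a)) * (exp (s * (x + a)) * f (x + a)) := by
    funext x
    rw [← mul_assoc, ← exp_add]
    ring_nf
  constructor
  · exact hexp ▸ (hf.integrable.comp_add_right a).const_mul _
  · rw [hexp, integral_const_mul, integral_add_right_eq_self fun x ↦ exp (s * x) * f x,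
      hf.integral_eq]

theorem comp_mul_left {c : ℝ} (hc : c ≠ 0) (hf : HasLaplaceTransform f volume s A) :
    HasLaplaceTransform (fun x ↦ f (c * x)) volume (c * s) (|c|⁻¹ * A) := by
  have hexp (x : ℝ) : exp (c * s * x) = exp (s * (c * x)) := by ring_nf
  constructor
  · simpa only [hexp] using hf.integrable.comp_mul_left' hc
  · simp only [hexp, Measure.integral_comp_mul_left fun x ↦ exp (s * x) * f x, hf.integral_eq,
      smul_eq_mul, abs_inv]

theorem of_Ioi {B : ℝ} (hpos : HasLaplaceTransform f (volume.restrict (Ioi 0)) s A)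
    (hneg : HasLaplaceTransform (fun x ↦ f (-x)) (volume.restrict (Ioi 0)) (-s) B) :
    HasLaplaceTransform f volume s (A + B) := by
  have hreflect (x : ℝ) : exp (-s * x) * f (-x) = exp (s * -x) * f (-x) := by ring_nf
  have hIic : IntegrableOn (fun x ↦ exp (s * x) * f x) (Iic 0) := by
    have hneg_int := hneg.integrable
    simp only [hreflect] at hneg_int
    rw [← IntegrableOn, ← neg_zero] at hneg_int
    rw [integrableOn_Iic_iff_integrableOn_Iio]
    simpa only [neg_neg] using hneg_int.comp_neg_Iio
  have hB : ∫ x in Iic 0, exp (s * x) * f x = B := by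
    rw [← neg_zero, ← integral_comp_neg_Ioi, ← hneg.integral_eq]
    simp only [hreflect]
  constructor
  · rw [← integrableOn_univ, ← Iic_union_Ioi (a := (0 : ℝ))]
    exact hIic.union hpos.integrable
  · rw [← intervalIntegral.integral_Iic_add_Ioi hIic hpos.integrable, hB, hpos.integral_eq,
      add_comm]

end ChangeOfVariables

end HasLaplaceTransform

section HalfLine

variable {s : ℝ}

theorem hasLaplaceTransform_Ioi_exp_neg_mul {k : ℝ} (hsk : s < k) :
    HasLaplaceTransform (fun x ↦ exp (-(k * x))) (volume.restrict (Ioi 0)) s (k - s)⁻¹ := by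
  have hexp (x : ℝ) : exp (s * x) * exp (-(k * x)) = exp ((s - k) * x) := by
    rw [← exp_add]
    ring_nf
  have hneg : s - k < 0 := sub_neg.2 hsk
  constructor
  · simpa only [hexp, IntegrableOn] using integrableOn_exp_mul_Ioi hneg 0
  · simp only [hexp, integral_exp_mul_Ioi hneg, mul_zero, exp_zero]
    rw [← neg_sub k s, neg_div_neg_eq, one_div]

theorem hasLaplaceTransform_Ioi_id (hs : s < 0) :
    HasLaplaceTransform (fun x ↦ x) (volume.restrict (Ioi 0)) s (s ^ 2)⁻¹ := by
  have hintegral : ∫ x in Ioi 0, exp (s * x) * x = (s ^ 2)⁻¹ := by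
    have hGamma := integral_rpow_mul_exp_neg_mul_Ioi two_pos (neg_pos.2 hs)
    rw [show (2 : ℝ) - 1 = 1 by norm_num, Gamma_two, mul_one, rpow_two, one_div, inv_pow,
      neg_sq] at hGamma
    simpa only [rpow_one, neg_mul, neg_neg, mul_comm _ (exp _)] using hGamma
  exact ⟨.of_integral_ne_zero (hintegral ▸ inv_ne_zero (pow_ne_zero 2 hs.ne)), hintegral⟩

theorem summable_inv_succ_mul_succ_sub (s : ℝ) :
    Summable fun n : ℕ ↦ (((n : ℝ) + 1) * (n + 1 - s))⁻¹ := by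
  have hsq (a : ℝ) : Summable fun n : ℕ ↦ ((n : ℝ) + a)⁻¹ ^ 2 := by
    simpa using (summable_one_div_nat_add_rpow a 2).2 one_lt_two
  refine .of_norm_bounded ((hsq 1).add (hsq (1 - s))) fun n ↦ ?_
  rw [mul_inv, add_sub_assoc, Real.norm_eq_abs, abs_le]
  -- AM-GM: `2 |a b| ≤ a² + b²`
  constructor <;> nlinarith [sq_nonneg ((n + 1 : ℝ)⁻¹ + (n + (1 - s))⁻¹),
    sq_nonneg ((n + 1 : ℝ)⁻¹ - (n + (1 - s))⁻¹)]

theorem hasLaplaceTransform_Ioi_log_one_sub_exp_neg (hs : s < 1) :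
    HasLaplaceTransform (fun x ↦ log (1 - exp (-x))) (volume.restrict (Ioi 0)) s
      (-∑' n : ℕ, (((n : ℝ) + 1) * (n + 1 - s))⁻¹) := by
  have hterm (n : ℕ) : HasLaplaceTransform (fun x ↦ ((n : ℝ) + 1)⁻¹ * exp (-((n + 1) * x)))
      (volume.restrict (Ioi 0)) s (((n : ℝ) + 1) * (n + 1 - s))⁻¹ := by
    rw [mul_inv]
    exact (hasLaplaceTransform_Ioi_exp_neg_mul (hs.trans_le (by simp))).const_mul _
  have hseries : ∀ᵐ x ∂volume.restrict (Ioi (0 : ℝ)),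
      HasSum (fun n : ℕ ↦ ((n : ℝ) + 1)⁻¹ * exp (-((n + 1) * x))) (-log (1 - exp (-x))) := by
    refine ae_restrict_of_forall_mem measurableSet_Ioi fun x (hx : 0 < x) ↦ ?_
    have hlt : |exp (-x)| < 1 := by rwa [abs_exp, exp_lt_one_iff, neg_lt_zero]
    convert! hasSum_pow_div_log_of_abs_lt_one hlt using 2 with n
    rw [← exp_nat_mul, div_eq_inv_mul]
    push_cast
    ring_nf
  have hneg := HasLaplaceTransform.of_hasSum hterm (fun n x ↦ by positivity)
    (summable_inv_succ_mul_succ_sub s) hseries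
  simpa only [neg_one_mul, neg_neg] using hneg.const_mul (-1)

theorem one_sub_exp_neg_ne_zero {x : ℝ} (hx : x ≠ 0) : 1 - exp (-x) ≠ 0 := by
  rwa [sub_ne_zero, ne_comm, ne_eq, exp_eq_one_iff, neg_eq_zero]

theorem log_one_sub_exp_eq {y : ℝ} (hy : y ≠ 0) :
    log (1 - exp y) = y + log (1 - exp (-y)) := by
  have hfactor : 1 - exp y = -(exp y * (1 - exp (-y))) := by
    rw [mul_sub, ← exp_add, add_neg_cancel, exp_zero]
    ring
  rw [hfactor, log_neg_eq_log, log_mul (exp_ne_zero y) (one_sub_exp_neg_ne_zero hy), log_exp]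

end HalfLine

section TwoSided

variable {s : ℝ}

theorem pi_mul_cot_pi_mul_sub_inv_eq_tsum (hs : ∀ n : ℤ, (n : ℝ) ≠ s) :
    π * cot (π * s) - s⁻¹ = ∑' n : ℕ, ((s - (n + 1))⁻¹ + (s + (n + 1))⁻¹) := by
  have hmem : (s : ℂ) ∈ Complex.integerComplement := fun ⟨n, hn⟩ ↦ hs n (by exact_mod_cast hn)
  simp only [← one_div]
  exact_mod_cast cot_series_rep' hmem

theorem inv_sq_sub_tsum_sub_tsum_eq_pi_mul_cot_div (hs : ∀ n : ℤ, (n : ℝ) ≠ s) :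
    (s ^ 2)⁻¹ - ∑' n : ℕ, (((n : ℝ) + 1) * (n + 1 - s))⁻¹
      - ∑' n : ℕ, (((n : ℝ) + 1) * (n + 1 + s))⁻¹ = π * cot (π * s) / s := by
  have hs0 : s ≠ 0 := by simpa using (hs 0).symm
  have hterm (n : ℕ) : (s - (n + 1))⁻¹ + (s + (n + 1))⁻¹ =
      -s * ((((n : ℝ) + 1) * (n + 1 - s))⁻¹ + (((n : ℝ) + 1) * (n + 1 + s))⁻¹) := by
    have hsub : (n : ℝ) + 1 - s ≠ 0 := sub_ne_zero.2 (by exact_mod_cast hs (n + 1))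
    have hadd : (n : ℝ) + 1 + s ≠ 0 := fun h ↦ hs (-(n + 1)) (by push_cast; linarith)
    have hsucc : (n : ℝ) + 1 ≠ 0 := n.cast_add_one_ne_zero
    rw [← neg_sub, add_comm s]
    field_simp
    ring
  have hadd : Summable fun n : ℕ ↦ (((n : ℝ) + 1) * (n + 1 + s))⁻¹ := by
    simpa only [sub_neg_eq_add] using summable_inv_succ_mul_succ_sub (-s)
  have hcot := pi_mul_cot_pi_mul_sub_inv_eq_tsum hs
  simp only [hterm, tsum_mul_left, (summable_inv_succ_mul_succ_sub s).tsum_add hadd] at hcot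
  rw [sub_eq_iff_eq_add.1 hcot]
  field_simp
  ring

/-- For `x < 0` the argument of `log` is negative, and `log` there means `log |1 - e^{-x}|`. -/
theorem hasLaplaceTransform_log_one_sub_exp_neg (hs0 : 0 < s) (hs1 : s < 1) :
    HasLaplaceTransform (fun x ↦ log (1 - exp (-x))) volume s (π * cot (π * s) / s) := by
  have hneg : HasLaplaceTransform (fun x ↦ log (1 - exp (- -x))) (volume.restrict (Ioi 0)) (-s)
      ((s ^ 2)⁻¹ + -∑' n : ℕ, (((n : ℝ) + 1) * (n + 1 + s))⁻¹) := by
    have hfold := (hasLaplaceTransform_Ioi_id (neg_lt_zero.2 hs0)).add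
      (hasLaplaceTransform_Ioi_log_one_sub_exp_neg (s := -s) (by linarith))
    rw [neg_sq] at hfold
    simp only [sub_neg_eq_add] at hfold
    refine hfold.congr_ae (ae_restrict_of_forall_mem measurableSet_Ioi fun y (hy : 0 < y) ↦ ?_)
    simp only [neg_neg, log_one_sub_exp_eq hy.ne']
  have hnonint (n : ℤ) : (n : ℝ) ≠ s := by
    rintro rfl
    norm_cast at hs0 hs1
    lia
  convert (hasLaplaceTransform_Ioi_log_one_sub_exp_neg hs1).of_Ioi hneg using 1
  rw [← inv_sq_sub_tsum_sub_tsum_eq_pi_mul_cot_div hnonint]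
  ring

theorem log_one_add_exp_neg_eq {x : ℝ} (hx : x ≠ 0) :
    log (1 + exp (-x)) = log (1 - exp (-(2 * x))) - log (1 - exp (-x)) := by
  have hne : 1 - exp (-x) ≠ 0 := one_sub_exp_neg_ne_zero hx
  have hfactor : 1 - exp (-(2 * x)) = (1 - exp (-x)) * (1 + exp (-x)) := by
    rw [two_mul, neg_add, exp_add]
    ring
  rw [hfactor, log_mul hne (by positivity), add_sub_cancel_left]

theorem cot_half_sub_cot {θ : ℝ} (hθ : sin θ ≠ 0) : cot (θ / 2) - cot θ = (sin θ)⁻¹ := by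
  obtain ⟨φ, rfl⟩ : ∃ φ, θ = 2 * φ := ⟨θ / 2, by ring⟩
  have hsin : sin φ ≠ 0 := fun h ↦ hθ (by simp [sin_two_mul, h])
  have hcos : cos φ ≠ 0 := fun h ↦ hθ (by simp [sin_two_mul, h])
  rw [mul_div_cancel_left₀ φ two_ne_zero, cot_eq_cos_div_sin, cot_eq_cos_div_sin, sin_two_mul,
    cos_two_mul]
  field_simp
  ring

theorem sin_pi_mul_pos (hs0 : 0 < s) (hs1 : s < 1) : 0 < sin (π * s) :=
  sin_pos_of_pos_of_lt_pi (by positivity) (mul_lt_of_lt_one_right pi_pos hs1)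

theorem hasLaplaceTransform_log_one_add_exp_neg (hs0 : 0 < s) (hs1 : s < 1) :
    HasLaplaceTransform (fun x ↦ log (1 + exp (-x))) volume s (π / (s * sin (π * s))) := by
  have hdouble : HasLaplaceTransform (fun x ↦ log (1 - exp (-(2 * x)))) volume s
      (π * cot (π * s / 2) / s) := by
    convert (hasLaplaceTransform_log_one_sub_exp_neg (half_pos hs0) (by linarith)).comp_mul_left
      two_ne_zero using 1
    · ring
    · rw [abs_two, mul_div_assoc π s 2]
      field_simp
  have hsub := hdouble.sub (hasLaplaceTransform_log_one_sub_exp_neg hs0 hs1)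
  convert hsub.congr_ae (g := fun x ↦ log (1 + exp (-x))) ?_ using 1
  · rw [← sub_div, ← mul_sub, cot_half_sub_cot (sin_pi_mul_pos hs0 hs1).ne']
    field_simp
  · filter_upwards [Measure.ae_ne volume 0] with x hx
    rw [log_one_add_exp_neg_eq hx]

theorem cosh_add_cosh_eq (x a : ℝ) :
    cosh x + cosh a = exp x / 2 * ((1 + exp (-(x + a))) * (1 + exp (-(x + -a)))) := by
  simp only [cosh_eq, neg_add, neg_neg, exp_add, exp_neg]
  field_simp
  ring

theorem cosh_sub_one_eq (x : ℝ) : cosh x - 1 = exp x / 2 * (1 - exp (-x)) ^ 2 := by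
  rw [cosh_eq, exp_neg]
  field_simp
  ring

theorem log_cosh_add_cosh_div_cosh_sub_one {x : ℝ} (a : ℝ) (hx : x ≠ 0) :
    log ((cosh x + cosh a) / (cosh x - 1)) =
      log (1 + exp (-(x + a))) + log (1 + exp (-(x + -a))) - 2 * log (1 - exp (-x)) := by
  have hne : 1 - exp (-x) ≠ 0 := one_sub_exp_neg_ne_zero hx
  rw [cosh_add_cosh_eq, cosh_sub_one_eq, mul_div_mul_left _ _ (by positivity),
    log_div (by positivity) (by positivity), log_mul (by positivity) (by positivity), log_pow,
    Nat.cast_two]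

theorem hasLaplaceTransform_log_cosh_add_cosh_div_cosh_sub_one_of_pos (a : ℝ) (hs0 : 0 < s)
    (hs1 : s < 1) :
    HasLaplaceTransform (fun x ↦ log ((cosh x + cosh a) / (cosh x - 1))) volume s
      (2 * π * (cosh (s * a) - cos (π * s)) / (s * sin (π * s))) := by
  have hadd := hasLaplaceTransform_log_one_add_exp_neg hs0 hs1
  have hsub := hasLaplaceTransform_log_one_sub_exp_neg hs0 hs1
  have hcomb := ((hadd.comp_add_right a).add (hadd.comp_add_right (-a))).sub (hsub.const_mul 2)
  convert hcomb.congr_ae (g := fun x ↦ log ((cosh x + cosh a) / (cosh x - 1))) ?_ using 1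
  · have hsin := (sin_pi_mul_pos hs0 hs1).ne'
    rw [cosh_eq, cot_eq_cos_div_sin, mul_neg, neg_neg]
    field_simp
    ring
  · filter_upwards [Measure.ae_ne volume 0] with x hx
    rw [log_cosh_add_cosh_div_cosh_sub_one a hx]

theorem hasLaplaceTransform_log_cosh_add_cosh_div_cosh_sub_one (a : ℝ) (hs0 : s ≠ 0)
    (hs1 : |s| < 1) :
    HasLaplaceTransform (fun x ↦ log ((cosh x + cosh a) / (cosh x - 1))) volume s
      (2 * π * (cosh (s * a) - cos (π * s)) / (s * sin (π * s))) := by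
  obtain ⟨hgt_neg_one, hlt_one⟩ := abs_lt.1 hs1
  rcases hs0.lt_or_gt with hneg | hpos
  · have hreflect := (hasLaplaceTransform_log_cosh_add_cosh_div_cosh_sub_one_of_pos a
      (neg_pos.2 hneg) (by linarith)).comp_neg
    simpa only [cosh_neg, neg_neg, neg_mul, mul_neg, cos_neg, sin_neg] using hreflect
  · exact hasLaplaceTransform_log_cosh_add_cosh_div_cosh_sub_one_of_pos a hpos hlt_one

end TwoSided

/-- **Two-sided Laplace transform of the distance-difference density `X₁(x;L)`.**
For `L ≥ 0` and `0 < |u| < 1/2`,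
`∫_{−∞}^∞ e^{2ux} · 2 log((cosh x + cosh(L/2))/(cosh x − 1)) dx
  = (2π/u)(cosh(Lu) − cos(2πu))/sin(2πu)`. -/
theorem stmt_9 (L u : ℝ) (hL : 0 ≤ L) (hu0 : 0 < |u|) (hu : |u| < 1/2) :
    ∫ x : ℝ, Real.exp (2*u*x)
        * (2 * Real.log ((Real.cosh x + Real.cosh (L/2)) / (Real.cosh x - 1)))
      = (2*π/u) * (Real.cosh (L*u) - Real.cos (2*π*u)) / Real.sin (2*π*u) := by
  have hdensity := (hasLaplaceTransform_log_cosh_add_cosh_div_cosh_sub_one (s := 2 * u) (L / 2)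
    (mul_ne_zero two_ne_zero (abs_pos.1 hu0)) (by rw [abs_mul, abs_two]; linarith)).const_mul 2
  rw [hdensity.integral_eq, show 2 * u * (L / 2) = L * u by ring,
    show π * (2 * u) = 2 * π * u by ring]
  field_simp
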